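/- For all words v₁, w₁, v₂, w₂ over the digit alphabet {1,2}, the 6×6 integer matrices Ã satisfy the multiplication law with reversed concatenation: Ã(v₁,w₁)·Ã(v₂,w₂) = Ã(v₂v₁, w₂w₁). -/

import Mathlib

/-!
Writing `vw` for concatenation, the base-3 value satisfies `(vw)₃ = (v)₃ · 3^|w| + (w)₃`
(`val3_append`), and lengths add. Substituting these into the entries of `Ã(v₂v₁, w₂w₁)`, the
multiplication law becomes 36 polynomial identities in the values `(vᵢ)₃`, `(wᵢ)₃` and the
powers `3^|vᵢ|`, `3^|wᵢ|`, each of which holds in any commutative ring.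
-/

/-- The base-3 value `(v)₃` of a word over the digit alphabet `{1,2}`
(`false` representing the digit `1`, `true` the digit `2`), most significant
digit first. -/
def val3 (v : List Bool) : ℕ :=
  v.foldl (fun a b => 3 * a + (if b then 2 else 1)) 0

/-- The 6×6 integer matrix `Ã(v,w)` (Hirvensalo's variant). -/
def matAt (v w : List Bool) : Matrix (Fin 6) (Fin 6) ℤ :=
  !![3^(v.length + w.length), 0, 0, -(val3 v : ℤ) * 3^w.length,
        (val3 w : ℤ) * 3^v.length, -2 * (val3 v : ℤ) * (val3 w : ℤ);
     0, 3^(2 * w.length), 0, (val3 w : ℤ) * 3^w.length, 0, (val3 w : ℤ)^2;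
     0, 0, 3^(2 * v.length), 0, -(val3 v : ℤ) * 3^v.length, (val3 v : ℤ)^2;
     0, 0, 0, 3^w.length, 0, 2 * (val3 w : ℤ);
     0, 0, 0, 0, 3^v.length, -2 * (val3 v : ℤ);
     0, 0, 0, 0, 0, 1]

/-- Folding from an accumulator `a` shifts `a` past all digits of the word. -/
theorem foldl_val3 (v : List Bool) (a : ℕ) :
    v.foldl (fun a b => 3 * a + (if b then 2 else 1)) a = a * 3 ^ v.length + val3 v := by
  induction v generalizing a with
  | nil => simp [val3]
  | cons b v ih =>
    simp only [val3, List.foldl_cons, List.length_cons]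
    rw [ih, ih (3 * 0 + _)]
    ring

theorem val3_append (v w : List Bool) :
    val3 (v ++ w) = val3 v * 3 ^ w.length + val3 w := by
  rw [← foldl_val3, val3, List.foldl_append]
  rfl

/-- The multiplication law with reversed concatenation:
`Ã(v₁,w₁)·Ã(v₂,w₂) = Ã(v₂v₁, w₂w₁)`. -/
theorem matAt_mul (v₁ w₁ v₂ w₂ : List Bool) :
    matAt v₁ w₁ * matAt v₂ w₂ = matAt (v₂ ++ v₁) (w₂ ++ w₁) := by
  unfold matAt
  simp only [val3_append, List.length_append]
  ext i j
  fin_cases i <;> fin_cases j <;>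
    simp [Matrix.mul_apply, Fin.sum_univ_succ] <;> ring
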